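/- Let e ≤ r be a positive integer, set I' = (f_1,…,f_e) and J' = J ∩ I'. If depth_S (I'/J') = d, then depth_S (I/J) = d. -/

import Mathlib

open MvPolynomial

/-- The square-free monomial `∏ i ∈ T, X i` associated to a set `T` of variables. -/
noncomputable def sqMon (K : Type) [Field K] {n : ℕ} (T : Finset (Fin n)) :
    MvPolynomial (Fin n) K :=
  ∏ i ∈ T, X i

/-- `GenBySqMonOfDeg K P I` means: `I` is generated by square-free monomials whose
degrees satisfy the predicate `P`. -/
def GenBySqMonOfDeg (K : Type) [Field K] {n : ℕ} (P : ℕ → Prop)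
    (I : Ideal (MvPolynomial (Fin n) K)) : Prop :=
  ∃ G : Set (Finset (Fin n)), (∀ T ∈ G, P T.card) ∧ I = Ideal.span (sqMon K '' G)

/-- `rho K d I` : the number of square-free monomials of degree `d` belonging to `I`. -/
noncomputable def rho (K : Type) [Field K] {n : ℕ} (d : ℕ)
    (I : Ideal (MvPolynomial (Fin n) K)) : ℕ :=
  Set.ncard {T : Finset (Fin n) | T.card = d ∧ sqMon K T ∈ I}

/-- The maximal graded ideal `(x_1, …, x_n)` of `K[x_1, …, x_n]`. -/
noncomputable def maxGraded (K : Type) [Field K] (n : ℕ) :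
    Ideal (MvPolynomial (Fin n) K) :=
  Ideal.span (Set.range (X : Fin n → MvPolynomial (Fin n) K))

/-- The depth of the module `M` with respect to the ideal `I` : the supremum of the
lengths of `M`-regular sequences consisting of elements of `I`. -/
noncomputable def moduleDepth {R : Type} [CommRing R] (I : Ideal R)
    (M : Type) [AddCommGroup M] [Module R M] : ℕ∞ :=
  sSup {k : ℕ∞ | ∃ rs : List R, k = (rs.length : ℕ∞) ∧ (∀ r ∈ rs, r ∈ I) ∧
    RingTheory.Sequence.IsRegular M rs}

/-- The `R`-module `I/J` (more precisely `I/(I ∩ J)`, which is `I/J` when `J ≤ I`). -/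
noncomputable abbrev idealQuot {R : Type} [CommRing R] (I J : Ideal R) : Type :=
  ↥I ⧸ (Submodule.comap I.subtype (J : Submodule R R))

section Aux
open CategoryTheory Abelian Limits

def EV {R : Type} [CommRing R] (N : ModuleCat.{0} R) (k : ℕ) (M : Type) [AddCommGroup M]
    [Module R M] : Prop :=
  ∀ i < k, Subsingleton (Ext N (ModuleCat.of R M) i)

section EVsec
variable {R : Type} [CommRing R] {N : ModuleCat.{0} R} {A B C : Type}
  [AddCommGroup A] [Module R A] [AddCommGroup B] [Module R B] [AddCommGroup C] [Module R C]

lemma EV.mono {k l : ℕ} (h : EV N k A) (hl : l ≤ k) : EV N l A :=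
  fun i hi => h i (by omega)

lemma EV.congr {k : ℕ} (e : A ≃ₗ[R] B) (h : EV N k A) : EV N k B := by
  intro i hi
  have := h i hi
  refine ⟨fun x y => ?_⟩
  have key : ∀ x : Ext N (ModuleCat.of R B) i, x = 0 := by
    intro x
    have h1 : (x.comp (Ext.mk₀ e.toModuleIso.inv) (add_zero i)).comp
        (Ext.mk₀ e.toModuleIso.hom) (add_zero i) = x := by
      generalize e.toModuleIso = φ
      simp
    rw [← h1, Subsingleton.elim (x.comp (Ext.mk₀ e.toModuleIso.inv) (add_zero i)) 0]
    simp
  rw [key x, key y]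

lemma sc_exact (f : A →ₗ[R] B) (g : B →ₗ[R] C) (hf : Function.Injective f)
    (hg : Function.Surjective g) (hfg : Function.Exact f g) :
    (ModuleCat.shortComplexOfCompEqZero f g hfg.linearMap_comp_eq_zero).ShortExact where
  exact := ModuleCat.shortComplex_exact _ hfg
  mono_f := by
    rw [ModuleCat.mono_iff_injective]; exact hf
  epi_g := by
    rw [ModuleCat.epi_iff_surjective]; exact hg

lemma EV.mid {k : ℕ} (f : A →ₗ[R] B) (g : B →ₗ[R] C) (hf : Function.Injective f)
    (hg : Function.Surjective g) (hfg : Function.Exact f g) (hA : EV N k A) (hC : EV N k C) :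
    EV N k B := by
  intro i hi
  have hS := sc_exact f g hf hg hfg
  have z1 := AddCommGrpCat.isZero_of_iff_subsingleton.mpr (hA i hi)
  have z2 := AddCommGrpCat.isZero_of_iff_subsingleton.mpr (hC i hi)
  exact AddCommGrpCat.subsingleton_of_isZero <| ShortComplex.Exact.isZero_of_both_zeros
    (Ext.covariant_sequence_exact₂' N hS i) (z1.eq_zero_of_src _) (z2.eq_zero_of_tgt _)

lemma EV.left {k : ℕ} (f : A →ₗ[R] B) (g : B →ₗ[R] C) (hf : Function.Injective f)
    (hg : Function.Surjective g) (hfg : Function.Exact f g) (hB : EV N (k + 1) B)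
    (hC : EV N k C) : EV N (k + 1) A := by
  intro i hi
  have hS := sc_exact f g hf hg hfg
  match i with
  | 0 =>
    have h0 := hB 0 (by omega)
    have : Mono (ModuleCat.shortComplexOfCompEqZero f g hfg.linearMap_comp_eq_zero).f := hS.mono_f
    have := Ext.postcomp_mk₀_injective_of_mono N
      (ModuleCat.shortComplexOfCompEqZero f g hfg.linearMap_comp_eq_zero).f
    exact this.subsingleton
  | i + 1 =>
    have z1 := AddCommGrpCat.isZero_of_iff_subsingleton.mpr (hC i (by omega))
    have z2 := AddCommGrpCat.isZero_of_iff_subsingleton.mpr (hB (i + 1) (by omega))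
    exact AddCommGrpCat.subsingleton_of_isZero <| ShortComplex.Exact.isZero_of_both_zeros
      (Ext.covariant_sequence_exact₁' N hS i (i + 1) rfl) (z1.eq_zero_of_src _)
      (z2.eq_zero_of_tgt _)

lemma EV.step {k : ℕ} (x : R) (hx : x ∈ Module.annihilator R N) (hreg : IsSMulRegular A x)
    (g : A →ₗ[R] C) (hg : Function.Surjective g)
    (hfg : Function.Exact (LinearMap.lsmul R A x) g) (hC : EV N k C) : EV N (k + 1) A := by
  intro i hi
  have hS := sc_exact (LinearMap.lsmul R A x) g hreg hg hfg
  have zero_gk : AddCommGrpCat.ofHom ((Ext.mk₀ (x • 𝟙 (ModuleCat.of R A))).postcomp N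
          (add_zero i)) = 0 := Ext.postcomp_smul_id_eq_zero_of_mem_annihilator hx i
  have mono : Mono (AddCommGrpCat.ofHom ((Ext.mk₀ (x • 𝟙 (ModuleCat.of R A))).postcomp N
          (add_zero i))) := by
    match i with
    | 0 =>
      have : Mono (ModuleCat.shortComplexOfCompEqZero _ g hfg.linearMap_comp_eq_zero).f := hS.mono_f
      exact Ext.mono_postcomp_mk₀_of_mono N
        (ModuleCat.shortComplexOfCompEqZero _ g hfg.linearMap_comp_eq_zero).f
    | i + 1 =>
      exact (Ext.covariant_sequence_exact₁' N hS i (i + 1) rfl).mono_g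
        ((AddCommGrpCat.isZero_of_iff_subsingleton.mpr (hC i (by omega))).eq_zero_of_src _)
  exact AddCommGrpCat.subsingleton_of_isZero (IsZero.of_mono_eq_zero _ zero_gk)

lemma EV.of_subsingleton {k : ℕ} [Subsingleton A] : EV N k A := by
  intro i hi
  have hz : IsZero (ModuleCat.of R A) := ModuleCat.isZero_of_subsingleton _
  refine ⟨fun x y => ?_⟩
  have key : ∀ x : Ext N (ModuleCat.of R A) i, x = 0 := by
    intro x
    have h1 : x.comp (Ext.mk₀ (𝟙 (ModuleCat.of R A))) (add_zero i) = x := by simp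
    rw [← h1, hz.eq_of_src (𝟙 _) 0]
    simp
  rw [key x, key y]

end EVsec

section depth
variable {R : Type} [CommRing R]

noncomputable abbrev NN (m : Ideal R) : ModuleCat.{0} R := ModuleCat.of R (Shrink.{0} (R ⧸ m))

lemma mem_ann_NN (m : Ideal R) (x : R) (hx : x ∈ m) : x ∈ Module.annihilator R (NN m) := by
  rw [(Shrink.linearEquiv R (R ⧸ m)).annihilator_eq, Ideal.annihilator_quotient]
  exact hx

lemma depth_eq_iff [IsNoetherianRing R] (m : Ideal R) (M : Type) [AddCommGroup M] [Module R M] [Module.Finite R M]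
    (h : m • (⊤ : Submodule R M) < ⊤) (d : ℕ) :
    moduleDepth m M = (d : ℕ∞) ↔ EV (NN m) d M ∧ ¬ EV (NN m) (d + 1) M := by
  have key : ∀ k : ℕ, EV (NN m) k M ↔ ∃ rs : List R, rs.length = k ∧ (∀ r ∈ rs, r ∈ m) ∧
      RingTheory.Sequence.IsRegular M rs := by
    intro k
    exact (ModuleCat.exists_isRegular_tfae m k (ModuleCat.of R M) h).out 1 3
  have le : ∀ k : ℕ, EV (NN m) k M → (k : ℕ∞) ≤ moduleDepth m M := by
    intro k hk
    obtain ⟨rs, h1, h2, h3⟩ := (key k).1 hk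
    exact le_sSup ⟨rs, by rw [h1], h2, h3⟩
  have ge : ∀ k : ℕ, ¬ EV (NN m) (k + 1) M → moduleDepth m M ≤ k := by
    intro k hk
    refine sSup_le ?_
    rintro _ ⟨rs, rfl, h2, h3⟩
    by_contra hlt
    have : k + 1 ≤ rs.length := by
      by_contra hh
      exact hlt (by exact_mod_cast (by omega : rs.length ≤ k))
    exact hk (((key _).2 ⟨rs, rfl, h2, h3⟩).mono this)
  constructor
  · intro hd
    constructor
    · match d with
      | 0 => intro i hi; omega
      | d + 1 =>
        by_contra hh
        have := ge d hh
        rw [hd] at this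
        have : d + 1 ≤ d := by exact_mod_cast this
        omega
    · intro hh
      have := le _ hh
      rw [hd] at this
      have : d + 1 ≤ d := by exact_mod_cast this
      omega
  · rintro ⟨h1, h2⟩
    exact le_antisymm (ge d h2) (le d h1)

end depth


section iq
variable {R : Type} [CommRing R] {N : ModuleCat.{0} R}

noncomputable def iqMap (X' Y' X Y : Ideal R) (hX : X' ≤ X) (hY : ∀ p ∈ X', p ∈ Y' → p ∈ Y) :
    idealQuot X' Y' →ₗ[R] idealQuot X Y :=
  Submodule.mapQ _ _ (Submodule.inclusion hX) (fun p hp => hY p.1 p.2 hp)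

lemma iq_exact (X' Y' X Y Z : Ideal R) (hX : X' ≤ X) (hY : ∀ p ∈ X', p ∈ Y' ↔ p ∈ Y)
    (hYZ : Y ≤ Z) (hXZ : X' ≤ Z) (hd : ∀ p ∈ X, p ∈ Z → ∃ q ∈ X', p - q ∈ Y) :
    ∃ (f : idealQuot X' Y' →ₗ[R] idealQuot X Y) (g : idealQuot X Y →ₗ[R] idealQuot X Z),
      Function.Injective f ∧ Function.Surjective g ∧ Function.Exact f g := by
  refine ⟨iqMap X' Y' X Y hX (fun p hp => (hY p hp).1),
    iqMap X Y X Z le_rfl (fun p _ h => hYZ h), ?_, ?_, ?_⟩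
  · rw [injective_iff_map_eq_zero]
    intro a
    obtain ⟨a, rfl⟩ := Submodule.Quotient.mk_surjective _ a
    intro h
    have h' : Submodule.Quotient.mk (Submodule.inclusion hX a) = (0 : idealQuot X Y) := h
    rw [Submodule.Quotient.mk_eq_zero] at h' ⊢
    exact (hY a.1 a.2).2 h'
  · intro a
    obtain ⟨a, rfl⟩ := Submodule.Quotient.mk_surjective _ a
    exact ⟨Submodule.Quotient.mk a, rfl⟩
  · intro a
    obtain ⟨a, rfl⟩ := Submodule.Quotient.mk_surjective _ a
    constructor
    · intro h
      have h' : Submodule.Quotient.mk a = (0 : idealQuot X Z) := h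
      rw [Submodule.Quotient.mk_eq_zero] at h'
      obtain ⟨q, hq, hq'⟩ := hd a.1 a.2 h'
      refine ⟨Submodule.Quotient.mk ⟨q, hq⟩, ?_⟩
      change Submodule.Quotient.mk (Submodule.inclusion hX ⟨q, hq⟩) = _
      symm
      rw [Submodule.Quotient.eq]
      exact hq'
    · rintro ⟨q, hq⟩
      obtain ⟨q, rfl⟩ := Submodule.Quotient.mk_surjective _ q
      have hq' : Submodule.Quotient.mk (Submodule.inclusion hX q) =
        (Submodule.Quotient.mk a : idealQuot X Y) := hq
      symm at hq'
      rw [Submodule.Quotient.eq] at hq'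
      change Submodule.Quotient.mk a = (0 : idealQuot X Z)
      rw [Submodule.Quotient.mk_eq_zero]
      have h1 : a.1 - q.1 ∈ Z := hYZ hq'
      have := Z.add_mem h1 (hXZ q.2)
      simpa using this

end iq

section mon
variable {K : Type} [Field K] {n : ℕ}

lemma maxGraded_fin : maxGraded K n = idealOfVars (Fin n) K := rfl

lemma EV_vars (N : ModuleCat.{0} (MvPolynomial (Fin n) K))
    (hN : ∀ i, (X i : MvPolynomial (Fin n) K) ∈ Module.annihilator _ N) (T : Finset (Fin n)) :
    EV N T.card (MvPolynomial (Fin n) K ⧸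
      Ideal.span ((X : Fin n → MvPolynomial (Fin n) K) '' {i | i ∉ T})) := by
  induction T using Finset.induction_on with
  | empty => intro i hi; simp at hi
  | insert j T hj ih =>
    rw [Finset.card_insert_of_notMem hj]
    set P := Ideal.span ((X : Fin n → MvPolynomial (Fin n) K) '' {i | i ∉ insert j T}) with hP
    set Q := Ideal.span ((X : Fin n → MvPolynomial (Fin n) K) '' {i | i ∉ T}) with hQ
    have hPQ : P ≤ Q := by
      apply Ideal.span_mono
      apply Set.image_mono
      intro i hi
      simp at hi ⊢
      exact hi.2
    have hdec : ∀ p ∈ Q, ∃ q, p - X j * q ∈ P := by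
      intro p hp
      have : Q = P ⊔ Ideal.span {X j} := by
        rw [hP, hQ, ← Ideal.span_union, ← Set.image_singleton, ← Set.image_union]
        congr 2
        ext i
        simp
        grind
      rw [this, Submodule.mem_sup] at hp
      obtain ⟨a, ha, b, hb, rfl⟩ := hp
      obtain ⟨q, rfl⟩ := Ideal.mem_span_singleton'.1 hb
      exact ⟨q, by convert ha using 1; ring⟩
    have hXj : X j ∈ Q := Ideal.subset_span ⟨j, hj, rfl⟩
    refine EV.step (X j) (hN j) ?_ (Submodule.mapQ P Q LinearMap.id hPQ) ?_ ?_ ih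
    · rw [isSMulRegular_iff_right_eq_zero_of_smul]
      intro p
      obtain ⟨p, rfl⟩ := Submodule.Quotient.mk_surjective _ p
      intro h
      rw [← Submodule.Quotient.mk_smul, Submodule.Quotient.mk_eq_zero] at h
      rw [Submodule.Quotient.mk_eq_zero]
      rw [hP, mem_ideal_span_X_image] at h ⊢
      intro m hm
      obtain ⟨i, hi, hi'⟩ := h (Finsupp.single j 1 + m) (by
        rw [mem_support_iff] at hm ⊢
        rwa [smul_eq_mul, add_comm, mul_comm, coeff_mul_X])
      refine ⟨i, hi, ?_⟩
      have : i ≠ j := by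
        rintro rfl; simp at hi
      simpa [Finsupp.single_apply, this.symm] using hi'
    · intro a
      obtain ⟨a, rfl⟩ := Submodule.Quotient.mk_surjective _ a
      exact ⟨Submodule.Quotient.mk a, rfl⟩
    · intro a
      obtain ⟨a, rfl⟩ := Submodule.Quotient.mk_surjective _ a
      rw [Submodule.mapQ_apply, Submodule.Quotient.mk_eq_zero]
      constructor
      · intro h
        obtain ⟨q, hq⟩ := hdec a h
        refine ⟨Submodule.Quotient.mk q, ?_⟩
        rw [LinearMap.lsmul_apply, ← Submodule.Quotient.mk_smul]
        symm
        rw [Submodule.Quotient.eq]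
        exact hq
      · rintro ⟨q, hq⟩
        obtain ⟨q, rfl⟩ := Submodule.Quotient.mk_surjective _ q
        rw [LinearMap.lsmul_apply, ← Submodule.Quotient.mk_smul] at hq
        symm at hq
        rw [Submodule.Quotient.eq] at hq
        have := Q.add_mem (hPQ hq) (Q.mul_mem_right q hXj)
        simpa using this

variable (K) in
/-- ideal of polynomials with all monomial supports in `U`. -/
noncomputable def EE (U : Set (Finset (Fin n))) : Ideal (MvPolynomial (Fin n) K) :=
  Ideal.span ((fun s => monomial s (1 : K)) '' {m | m.support ∈ U})

lemma mem_EE {U : Set (Finset (Fin n))} (hU : IsUpperSet U) (p : MvPolynomial (Fin n) K) :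
    p ∈ EE K U ↔ ∀ m ∈ p.support, m.support ∈ U := by
  rw [EE, mem_ideal_span_monomial_image]
  refine forall₂_congr fun m _ => ⟨?_, fun h => ⟨m, h, le_rfl⟩⟩
  rintro ⟨s, hs, hsm⟩
  exact hU (Finsupp.support_mono hsm) hs

noncomputable def ind (T : Finset (Fin n)) : Fin n →₀ ℕ := ∑ i ∈ T, Finsupp.single i 1

lemma ind_apply (T : Finset (Fin n)) (i : Fin n) : ind T i = if i ∈ T then 1 else 0 := by
  simp [ind, Finsupp.finset_sum_apply, Finsupp.single_apply]

lemma ind_support (T : Finset (Fin n)) : (ind T).support = T := by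
  ext i; simp [ind_apply]

lemma ind_le (T : Finset (Fin n)) (m : Fin n →₀ ℕ) : ind T ≤ m ↔ T ⊆ m.support := by
  constructor
  · intro h
    simpa [ind_support] using Finsupp.support_mono h
  · intro h i
    rw [ind_apply]
    split_ifs with hi
    · have := h hi
      simp at this; omega
    · omega

lemma sqMon_eq (T : Finset (Fin n)) : sqMon K T = monomial (ind T) 1 := by
  simp [sqMon, ind, X, monomial_sum_one]

lemma ind_degree (T : Finset (Fin n)) : (ind T).degree = T.card := by
  simp [ind, map_sum]

lemma span_sqMon (G : Set (Finset (Fin n))) :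
    Ideal.span (sqMon K '' G) = EE K {A | ∃ T ∈ G, T ⊆ A} := by
  have hU : IsUpperSet {A | ∃ T ∈ G, T ⊆ A} := by
    rintro A B hAB ⟨T, hT, h⟩
    exact ⟨T, hT, h.trans hAB⟩
  have : sqMon K '' G = (fun s => monomial s (1 : K)) '' (ind '' G) := by
    rw [Set.image_image]
    simp only [sqMon_eq]
  ext p
  rw [mem_EE hU, this, mem_ideal_span_monomial_image]
  refine forall₂_congr fun m _ => ?_
  simp [ind_le]

lemma EV_single (N : ModuleCat.{0} (MvPolynomial (Fin n) K))
    (hN : ∀ i, (X i : MvPolynomial (Fin n) K) ∈ Module.annihilator _ N) (T : Finset (Fin n))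
    (U : Set (Finset (Fin n))) (hU : IsUpperSet U) (hT : T ∈ U) (hU' : IsUpperSet (U \ {T})) :
    EV N T.card (idealQuot (EE K U) (EE K (U \ {T}))) := by
  have hTm : ∀ p, monomial (ind T) 1 * p ∈ EE K U := by
    intro p
    refine Ideal.mul_mem_right _ _ (Ideal.subset_span ⟨ind T, ?_, rfl⟩)
    simpa [ind_support] using hT
  let φ : MvPolynomial (Fin n) K →ₗ[MvPolynomial (Fin n) K] idealQuot (EE K U) (EE K (U \ {T})) :=
    (Submodule.mkQ _).comp
      (LinearMap.codRestrict (EE K U) (LinearMap.mulLeft _ (monomial (ind T) 1)) hTm)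
  have hφ : ∀ p, φ p = Submodule.Quotient.mk ⟨monomial (ind T) 1 * p, hTm p⟩ := fun p => rfl
  have hker : Ideal.span ((X : Fin n → MvPolynomial (Fin n) K) '' {i | i ∉ T}) =
      LinearMap.ker φ := by
    ext p
    rw [LinearMap.mem_ker, hφ, Submodule.Quotient.mk_eq_zero, Submodule.mem_comap]
    change _ ↔ monomial (ind T) 1 * p ∈ EE K (U \ {T})
    rw [mem_EE hU', mem_ideal_span_X_image]
    constructor
    · intro h m hm
      have hle : ind T ≤ m := by
        by_contra hle
        rw [mem_support_iff, coeff_monomial_mul'] at hm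
        simp [hle] at hm
      obtain ⟨m, rfl⟩ := exists_add_of_le hle
      rw [mem_support_iff, coeff_monomial_mul, one_mul] at hm
      obtain ⟨i, hi, hi'⟩ := h m (mem_support_iff.2 hm)
      refine ⟨hU ((ind_le _ _).1 hle) hT, ?_⟩
      intro he
      have : i ∈ (ind T + m).support := by
        simp [hi']
      rw [he] at this
      exact hi this
    · intro h m hm
      obtain ⟨h1, h2⟩ := h (ind T + m) (by
        rw [mem_support_iff, coeff_monomial_mul, one_mul]; exact mem_support_iff.1 hm)
      by_contra hh
      push Not at hh
      apply h2
      ext i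
      by_cases hi : i ∈ T
      · simp [ind_apply, hi]
      · simp [ind_apply, hi, hh i hi]
  have hsurj : Function.Surjective φ := by
    intro p
    obtain ⟨⟨p, hp⟩, rfl⟩ := Submodule.Quotient.mk_surjective _ p
    refine ⟨p.divMonomial (ind T), ?_⟩
    rw [hφ]
    symm
    rw [Submodule.Quotient.eq, Submodule.mem_comap]
    change p - monomial (ind T) 1 * p.divMonomial (ind T) ∈ EE K (U \ {T})
    have : p - monomial (ind T) 1 * p.divMonomial (ind T) = p.modMonomial (ind T) := by
      rw [sub_eq_iff_eq_add, modMonomial_add_divMonomial]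
    rw [this, mem_EE hU']
    intro m hm
    rw [mem_support_iff] at hm
    have hle : ¬ ind T ≤ m := fun h => hm (coeff_modMonomial_of_le _ h)
    rw [coeff_modMonomial_of_not_le _ hle] at hm
    refine ⟨(mem_EE hU p).1 hp m (mem_support_iff.2 hm), ?_⟩
    intro he
    exact hle ((ind_le _ _).2 (by rw [he]))
  have e := (Submodule.quotEquivOfEq _ _ hker).trans (φ.quotKerEquivOfSurjective hsurj)
  exact (EV_vars N hN T).congr e

lemma EV_filt (N : ModuleCat.{0} (MvPolynomial (Fin n) K))
    (hN : ∀ i, (X i : MvPolynomial (Fin n) K) ∈ Module.annihilator _ N) (d : ℕ)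
    (V : Set (Finset (Fin n))) (hV : IsUpperSet V) (c : ℕ) :
    ∀ (U : Set (Finset (Fin n))) (_ : IsUpperSet U) (_ : V ⊆ U)
    (_ : ∀ T ∈ U, T ∉ V → d ≤ T.card) (_ : (U \ V).ncard = c),
    EV N d (idealQuot (EE K U) (EE K V)) := by
  induction c with
  | zero =>
    intro U hU hVU hd hc
    have h0 : U \ V = ∅ := (Set.ncard_eq_zero (Set.toFinite _)).1 hc
    have : U = V := Set.Subset.antisymm (Set.diff_eq_empty.1 h0) hVU
    subst this
    have : Subsingleton (idealQuot (EE K U) (EE K U)) := by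
      rw [Submodule.Quotient.subsingleton_iff]
      ext x; simp
    exact EV.of_subsingleton
  | succ c ih =>
    intro U hU hVU hd hc
    have hne : (U \ V).Nonempty := by
      rw [Set.nonempty_iff_ne_empty]
      intro h; rw [h] at hc; simp at hc
    obtain ⟨T, hT⟩ := (Set.toFinite (U \ V)).exists_minimal hne
    have hTU : T ∈ U := hT.1.1
    have hTV : T ∉ V := hT.1.2
    have hU' : IsUpperSet (U \ {T}) := by
      rintro A B hAB ⟨hA, hAT⟩
      refine ⟨hU hAB hA, ?_⟩
      rintro rfl
      by_cases hAV : A ∈ V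
      · exact hTV (hV hAB hAV)
      · exact hAT (le_antisymm hAB (hT.2 ⟨hA, hAV⟩ hAB))
    have hVU' : V ⊆ U \ {T} := fun A hA => ⟨hVU hA, by rintro rfl; exact hTV hA⟩
    have h1 := ih (U \ {T}) hU' hVU' (fun A hA => hd A hA.1) (by
      have : (U \ {T}) \ V = (U \ V) \ {T} := by ext; simp; tauto
      rw [this, Set.ncard_diff_singleton_of_mem hT.1, hc]; rfl)
    have h2 := (EV_single N hN T U hU hTU hU').mono (hd T hTU hTV)
    have mono : ∀ {A B : Set (Finset (Fin n))}, A ⊆ B → EE K A ≤ EE K B := fun h =>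
      Ideal.span_mono (Set.image_mono fun _ hm => h hm)
    obtain ⟨f, g, hf, hg, hfg⟩ := iq_exact (EE K (U \ {T})) (EE K V) (EE K U) (EE K V)
      (EE K (U \ {T})) (mono Set.diff_subset) (fun _ _ => Iff.rfl) (mono hVU') le_rfl
      (fun p _ hp => ⟨p, hp, by simp⟩)
    exact EV.mid f g hf hg hfg h1 h2

lemma smul_lt (d : ℕ) (I J : Ideal (MvPolynomial (Fin n) K)) (hI : I ≤ maxGraded K n ^ d)
    (hJ : J ≤ maxGraded K n ^ (d + 1)) (T : Finset (Fin n)) (hT : T.card = d)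
    (hTI : sqMon K T ∈ I) :
    maxGraded K n • (⊤ : Submodule (MvPolynomial (Fin n) K) (idealQuot I J)) < ⊤ := by
  rw [lt_top_iff_ne_top]
  intro h
  have hle : maxGraded K n • (⊤ : Submodule (MvPolynomial (Fin n) K) (idealQuot I J)) ≤
      Submodule.map (Submodule.mkQ _) (Submodule.comap I.subtype (maxGraded K n ^ (d + 1))) := by
    rw [Submodule.smul_le]
    intro r hr x _
    obtain ⟨x, rfl⟩ := Submodule.Quotient.mk_surjective _ x
    refine ⟨r • x, ?_, rfl⟩
    change r * x.1 ∈ maxGraded K n ^ (d + 1)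
    rw [pow_succ']
    exact Ideal.mul_mem_mul hr (hI x.2)
  rw [h] at hle
  obtain ⟨y, hy, hy'⟩ := hle (Submodule.mem_top (x := Submodule.Quotient.mk ⟨sqMon K T, hTI⟩))
  symm at hy'
  rw [Submodule.mkQ_apply, Submodule.Quotient.eq] at hy'
  have h1 : sqMon K T - y.1 ∈ maxGraded K n ^ (d + 1) := hJ hy'
  have h2 : sqMon K T ∈ maxGraded K n ^ (d + 1) := by
    have := Ideal.add_mem _ h1 hy
    simpa using this
  rw [maxGraded_fin, sqMon_eq, monomial_mem_pow_idealOfVars_iff _ _ one_ne_zero, ind_degree] at h2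
  omega

lemma span_le_pow (d : ℕ) (G : Set (Finset (Fin n))) (hG : ∀ T ∈ G, T.card = d) :
    Ideal.span (sqMon K '' G) ≤ maxGraded K n ^ d := by
  rw [Ideal.span_le]
  rintro _ ⟨T, hT, rfl⟩
  rw [SetLike.mem_coe, maxGraded_fin, sqMon_eq, monomial_mem_pow_idealOfVars_iff _ _ one_ne_zero,
    ind_degree, hG T hT]

lemma EV_main (N : ModuleCat.{0} (MvPolynomial (Fin n) K))
    (hN : ∀ i, (X i : MvPolynomial (Fin n) K) ∈ Module.annihilator _ N) (d : ℕ)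
    (G H : Set (Finset (Fin n))) (hG : ∀ T ∈ G, T.card = d)
    (hle : Ideal.span (sqMon K '' H) ≤ Ideal.span (sqMon K '' G)) :
    EV N d (idealQuot (Ideal.span (sqMon K '' G)) (Ideal.span (sqMon K '' H))) := by
  have up : ∀ G : Set (Finset (Fin n)), IsUpperSet {A | ∃ T ∈ G, T ⊆ A} := by
    rintro G A B hAB ⟨T, hT, h⟩
    exact ⟨T, hT, h.trans hAB⟩
  have hsub : {A | ∃ T ∈ H, T ⊆ A} ⊆ {A | ∃ T ∈ G, T ⊆ A} := by
    rintro A ⟨T, hT, hTA⟩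
    have h1 := hle (Ideal.subset_span ⟨T, hT, rfl⟩)
    rw [span_sqMon, mem_EE (up G)] at h1
    have h2 := h1 (ind T) (by simp [sqMon_eq])
    rw [ind_support] at h2
    exact up G hTA h2
  rw [span_sqMon, span_sqMon]
  refine EV_filt N hN d _ (up H) _ _ (up G) hsub ?_ rfl
  rintro A ⟨T, hT, hTA⟩ _
  rw [← hG T hT]
  exact Finset.card_le_card hTA

end mon

end Aux

/-- Lemma 1.5. -/
theorem stmt_3 (n : ℕ) (K : Type) [Field K] (d : ℕ) (hd : 0 < d)
    (I J : Ideal (MvPolynomial (Fin n) K)) (hJ0 : J ≠ ⊥) (hJI : J < I)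
    (r : ℕ) (hr : 0 < r) (f : Fin r → Finset (Fin n)) (hfinj : Function.Injective f)
    (hfd : ∀ i, (f i).card = d)
    (hIgen : I = Ideal.span (Set.range fun i => sqMon K (f i)))
    (hJgen : GenBySqMonOfDeg K (fun k => k = d + 1) J)
    (e : ℕ) (he : 0 < e) (her : e ≤ r)
    (I' J' : Ideal (MvPolynomial (Fin n) K))
    (hI' : I' = Ideal.span (Set.range fun i : Fin e => sqMon K (f (Fin.castLE her i))))
    (hJ' : J' = J ⊓ I')
    (hdep : moduleDepth (maxGraded K n) (idealQuot I' J') = (d : ℕ∞)) :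
    moduleDepth (maxGraded K n) (idealQuot I J) = (d : ℕ∞) := by
  obtain ⟨H, hH, hJH⟩ := hJgen
  set m := maxGraded K n with hm
  set G : Set (Finset (Fin n)) := Set.range f with hGdef
  set G' : Set (Finset (Fin n)) := Set.range fun i : Fin e => f (Fin.castLE her i) with hG'def
  have hG : ∀ T ∈ G, T.card = d := by rintro _ ⟨i, rfl⟩; exact hfd i
  have hG' : ∀ T ∈ G', T.card = d := by rintro _ ⟨i, rfl⟩; exact hfd _
  have hIG : I = Ideal.span (sqMon K '' G) := by
    rw [hIgen, hGdef, ← Set.range_comp]; rfl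
  have hIG' : I' = Ideal.span (sqMon K '' G') := by
    rw [hI', hG'def, ← Set.range_comp]; rfl
  have hN : ∀ i, (X i : MvPolynomial (Fin n) K) ∈
      Module.annihilator (MvPolynomial (Fin n) K) (NN m) := fun i =>
    mem_ann_NN m _ (Ideal.subset_span ⟨i, rfl⟩)
  have hII : I' ≤ I := by
    rw [hIG, hIG']
    apply Ideal.span_mono
    apply Set.image_mono
    rintro _ ⟨i, rfl⟩
    exact ⟨_, rfl⟩
  have hJle : J ≤ m ^ (d + 1) := by rw [hJH]; exact span_le_pow _ _ hH
  have hlt : m • (⊤ : Submodule (MvPolynomial (Fin n) K) (idealQuot I J)) < ⊤ :=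
    smul_lt d I J (by rw [hIG]; exact span_le_pow _ _ hG) hJle (f ⟨0, hr⟩) (hfd _)
      (by rw [hIG]; exact Ideal.subset_span ⟨_, ⟨_, rfl⟩, rfl⟩)
  have hlt' : m • (⊤ : Submodule (MvPolynomial (Fin n) K) (idealQuot I' J')) < ⊤ :=
    smul_lt d I' J' (by rw [hIG']; exact span_le_pow _ _ hG')
      (by rw [hJ']; exact inf_le_left.trans hJle) (f (Fin.castLE her ⟨0, he⟩)) (hfd _)
      (by rw [hIG']; exact Ideal.subset_span ⟨_, ⟨⟨0, he⟩, rfl⟩, rfl⟩)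
  rw [depth_eq_iff m _ hlt'] at hdep
  rw [depth_eq_iff m _ hlt]
  constructor
  · have := EV_main (NN m) hN d G H hG (by rw [← hIG, ← hJH]; exact hJI.le)
    rwa [← hIG, ← hJH] at this
  · intro hEV
    apply hdep.2
    have hZ : J ⊔ I' = Ideal.span (sqMon K '' (H ∪ G')) := by
      rw [hJH, hIG', Set.image_union, Ideal.span_union]
    have hC : EV (NN m) d (idealQuot I (J ⊔ I')) := by
      have := EV_main (NN m) hN d G (H ∪ G') hG (by
        rw [← hIG, ← hZ]; exact sup_le hJI.le hII)
      rwa [← hIG, ← hZ] at this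
    obtain ⟨φ, g, hf, hg, hfg⟩ := iq_exact I' J' I J (J ⊔ I') hII
      (fun p hp => by rw [hJ']; exact ⟨fun h => h.1, fun h => ⟨h, hp⟩⟩) le_sup_left le_sup_right
      (fun p _ hp => by
        obtain ⟨a, ha, b, hb, rfl⟩ := Submodule.mem_sup.1 hp
        exact ⟨b, hb, by simpa using ha⟩)
    exact EV.left φ g hf hg hfg hEV hC
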